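/- (Corollary (5.21) of Berndt–Bhargava–Garvan.) For every real p with 0 < p < 1, one has √3 · ₂F₁(1/3, 2/3; 1; 1 − β(p)) = γ(p) · ₂F₁(1/2, 1/2; 1; 1 − α(p)). (For such p both 1 − α(p) and 1 − β(p) lie in (0,1), so both hypergeometric series converge absolutely.) -/

import Mathlib

open Real

/-- Gauss hypergeometric function ₂F₁ defined via its power series
    (the tsum; converges absolutely for |z| < 1). -/
noncomputable def hyp2F1 (a b c z : ℝ) : ℝ :=
  ∑' n : ℕ, ((ascPochhammer ℝ n).eval a * (ascPochhammer ℝ n).eval b /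
      (ascPochhammer ℝ n).eval c) * z ^ n / (Nat.factorial n)

noncomputable def α (p : ℝ) : ℝ := p ^ 3 * (2 + p) / (1 + 2 * p)

noncomputable def β (p : ℝ) : ℝ := 27 * p ^ 2 * (1 + p) ^ 2 / (4 * (1 + p + p ^ 2) ^ 3)

noncomputable def γ (p : ℝ) : ℝ := (1 + p + p ^ 2) / Real.sqrt (1 + 2 * p)

/-!
As functions of `p`, the two hypergeometric factors, the second one multiplied by `γ`, satisfy the
same equation `(P y')' = Q y` on `(0, 1]`: it is the pullback of the hypergeometric equation along
`1 - β`, and equally the pullback along `1 - α` followed by multiplication by `γ`. Its leading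
coefficient `P` vanishes at `p = 1`, where `α = β = 1` and both solutions are regular. Hence their
Wronskian `P (y₁' y₂ - y₁ y₂')`, which is constant, is zero, so the solutions are proportional, and
their values at `p = 1` give the factor `γ 1 = √3`.
-/

section PowerSeries

open FormalMultilinearSeries

variable {𝕜 : Type*} [NontriviallyNormedField 𝕜]

lemma hasSum_of_hasFPowerSeriesOnBall_ofScalars {f : 𝕜 → 𝕜} {C : ℕ → 𝕜} {r : ENNReal}
    (h : HasFPowerSeriesOnBall f (ofScalars 𝕜 C) 0 r) {z : 𝕜} (hz : z ∈ Metric.eball 0 r) :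
    HasSum (fun n ↦ C n * z ^ n) (f z) := by
  simpa only [ofScalars_apply_eq, smul_eq_mul, zero_add] using h.hasSum hz

lemma hasFPowerSeriesOnBall_deriv_ofScalars [CompleteSpace 𝕜] {f : 𝕜 → 𝕜} {C : ℕ → 𝕜}
    {r : ENNReal} (h : HasFPowerSeriesOnBall f (ofScalars 𝕜 C) 0 r) :
    HasFPowerSeriesOnBall (deriv f) (ofScalars 𝕜 fun n ↦ (n + 1) * C (n + 1)) 0 r := by
  have hseries : ofScalars 𝕜 (fun n ↦ (n + 1) * C (n + 1)) =
      (ContinuousLinearMap.apply 𝕜 𝕜 (1 : 𝕜)).compFormalMultilinearSeries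
        (ofScalars 𝕜 C).derivSeries := by
    ext1 n
    refine ContinuousMultilinearMap.ext_ring ?_
    simp [ofScalars]
  rw [hseries]
  exact (ContinuousLinearMap.apply 𝕜 𝕜 (1 : 𝕜)).comp_hasFPowerSeriesOnBall h.fderiv

lemma hasSum_mul_pow_of_hasSum_succ {d : ℕ → 𝕜} (hd : d 0 = 0) {z s : 𝕜}
    (h : HasSum (fun n ↦ d (n + 1) * z ^ n) s) : HasSum (fun n ↦ d n * z ^ n) (z * s) := by
  rw [← hasSum_nat_add_iff' 1]
  simpa [hd, pow_succ', mul_left_comm] using h.mul_left z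

/-- The recurrence is the equation read off coefficientwise: with `θ = z d/dz`, the equation is
`θ (θ + c - 1) f = z (θ + a) (θ + b) f`. -/
lemma hypergeometric_ode_of_coeff_recurrence [CompleteSpace 𝕜] {f : 𝕜 → 𝕜} {C : ℕ → 𝕜}
    {r : ENNReal} {a b c z : 𝕜} (h : HasFPowerSeriesOnBall f (ofScalars 𝕜 C) 0 r)
    (hC : ∀ n : ℕ, (n + 1) * (c + n) * C (n + 1) = (a + n) * (b + n) * C n)
    (hz : z ∈ Metric.eball 0 r) :
    z * (1 - z) * deriv (deriv f) z + (c - (a + b + 1) * z) * deriv f z = a * b * f z := by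
  have hderiv := hasFPowerSeriesOnBall_deriv_ofScalars h
  have hf := hasSum_of_hasFPowerSeriesOnBall_ofScalars h hz
  have hf' := hasSum_of_hasFPowerSeriesOnBall_ofScalars hderiv hz
  have hf'' := hasSum_of_hasFPowerSeriesOnBall_ofScalars
    (hasFPowerSeriesOnBall_deriv_ofScalars hderiv) hz
  have hzf' : HasSum (fun n : ℕ ↦ n * C n * z ^ n) (z * deriv f z) :=
    hasSum_mul_pow_of_hasSum_succ (by simp) (by simpa using hf')
  have hzf'' : HasSum (fun n : ℕ ↦ n * ((n + 1) * C (n + 1)) * z ^ n)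
      (z * deriv (deriv f) z) :=
    hasSum_mul_pow_of_hasSum_succ (by simp) (by simpa using hf'')
  have hzzf'' : HasSum (fun n : ℕ ↦ (n - 1) * (n * C n) * z ^ n)
      (z * (z * deriv (deriv f) z)) :=
    hasSum_mul_pow_of_hasSum_succ (by simp) (by simpa using hzf'')
  have hsum := ((hzf''.sub hzzf'').add (hf'.mul_left c)).sub
    ((hzf'.mul_left (a + b + 1)).add (hf.mul_left (a * b)))
  have hzero := hsum.unique ((hasSum_zero (α := 𝕜)).congr_fun fun n ↦ by
    linear_combination z ^ n * hC n)
  linear_combination hzero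

end PowerSeries

section Hypergeometric

open FormalMultilinearSeries

variable {𝕂 : Type*} [RCLike 𝕂]

lemma one_le_radius_ordinaryHypergeometricSeries (a b c : 𝕂) :
    1 ≤ (ordinaryHypergeometricSeries 𝕂 a b c).radius := by
  by_cases habc : ∀ k : ℕ, ↑k ≠ -a ∧ ↑k ≠ -b ∧ ↑k ≠ -c
  · exact (ordinaryHypergeometricSeries_radius_eq_one 𝕂 a b c habc).ge
  · obtain ⟨k, hk⟩ : ∃ k : ℕ, ↑k = -a ∨ ↑k = -b ∨ ↑k = -c := by
      simpa only [not_forall, not_and_or, not_not] using habc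
    rw [(ordinaryHypergeometricSeries 𝕂 a b c).radius_eq_top_of_forall_image_add_eq_zero (k + 1)
      fun n ↦ ordinaryHypergeometricSeries_eq_zero_of_neg_nat a b c hk (by lia)]
    exact le_top

lemma hasFPowerSeriesOnBall_ordinaryHypergeometric (a b c : 𝕂) :
    HasFPowerSeriesOnBall (₂F₁ a b c) (ofScalars 𝕂 (ordinaryHypergeometricCoefficient a b c)) 0 1 :=
  have hradius := one_le_radius_ordinaryHypergeometricSeries a b c
  ((ordinaryHypergeometricSeries 𝕂 a b c).hasFPowerSeriesOnBall
    (zero_lt_one.trans_le hradius)).mono zero_lt_one hradius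

lemma ordinaryHypergeometricCoefficient_succ (a b : 𝕂) {c : 𝕂} {n : ℕ} (hc : (n : 𝕂) ≠ -c) :
    (n + 1) * (c + n) * ordinaryHypergeometricCoefficient a b c (n + 1) =
      (a + n) * (b + n) * ordinaryHypergeometricCoefficient a b c n := by
  have hcn : c + n ≠ 0 := fun h ↦ hc (eq_neg_of_add_eq_zero_right h)
  have hn : (n : 𝕂) + 1 ≠ 0 := n.cast_add_one_ne_zero
  simp only [ordinaryHypergeometricCoefficient, ascPochhammer_succ_eval, Nat.factorial_succ,
    Nat.cast_mul, Nat.cast_add, Nat.cast_one, mul_inv]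
  field_simp

lemma mem_eball_zero_one {E : Type*} [SeminormedAddCommGroup E] {x : E} :
    x ∈ Metric.eball 0 1 ↔ ‖x‖ < 1 := by
  rw [← ENNReal.ofReal_one, Metric.eball_ofReal, mem_ball_zero_iff]

lemma analyticAt_ordinaryHypergeometric (a b c : 𝕂) {z : 𝕂} (hz : ‖z‖ < 1) :
    AnalyticAt 𝕂 (₂F₁ a b c) z :=
  (hasFPowerSeriesOnBall_ordinaryHypergeometric a b c).analyticAt_of_mem
    (mem_eball_zero_one.2 hz)

lemma ordinaryHypergeometric_ode (a b : 𝕂) {c z : 𝕂} (hc : ∀ n : ℕ, (n : 𝕂) ≠ -c)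
    (hz : ‖z‖ < 1) :
    z * (1 - z) * deriv (deriv (₂F₁ a b c)) z + (c - (a + b + 1) * z) * deriv (₂F₁ a b c) z =
      a * b * ₂F₁ a b c z :=
  hypergeometric_ode_of_coeff_recurrence (hasFPowerSeriesOnBall_ordinaryHypergeometric a b c)
    (fun n ↦ ordinaryHypergeometricCoefficient_succ a b (hc n)) (mem_eball_zero_one.2 hz)

end Hypergeometric

lemma hyp2F1_eq_ordinaryHypergeometric (a b c z : ℝ) : hyp2F1 a b c z = ₂F₁ a b c z := by
  rw [hyp2F1, ordinaryHypergeometric_eq_tsum]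
  exact tsum_congr fun n ↦ by rw [smul_eq_mul]; ring

lemma norm_lt_one_of_mem_Ico {z : ℝ} (hz : z ∈ Set.Ico 0 1) : ‖z‖ < 1 := by
  rw [Real.norm_of_nonneg hz.1]
  exact hz.2

lemma one_le_ordinaryHypergeometric {a b c z : ℝ} (ha : 0 < a) (hb : 0 < b) (hc : 0 < c)
    (hz : z ∈ Set.Ico 0 1) : 1 ≤ ₂F₁ a b c z := by
  have hsum := hasSum_of_hasFPowerSeriesOnBall_ofScalars
    (hasFPowerSeriesOnBall_ordinaryHypergeometric a b c)
    (mem_eball_zero_one.2 (norm_lt_one_of_mem_Ico hz))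
  have hterm (n : ℕ) : 0 ≤ ordinaryHypergeometricCoefficient a b c n * z ^ n := by
    have ha := ascPochhammer_pos n a ha
    have hb := ascPochhammer_pos n b hb
    have hc := ascPochhammer_pos n c hc
    have hz := hz.1
    rw [ordinaryHypergeometricCoefficient]
    positivity
  simpa [ordinaryHypergeometricCoefficient] using le_hasSum hsum 0 fun n _ ↦ hterm n

section SturmLiouville

/-- `y` solves the Sturm–Liouville equation `(P y')' = Q y` at `x`, with flux `φ = P y'`. The
equation is written as a first-order system for `(y, φ)`, so that only the values `P = P(x)` and
`Q = Q(x)` of the coefficients enter. -/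
structure IsSturmLiouvilleAt {𝕜 : Type*} [NontriviallyNormedField 𝕜] (P Q : 𝕜) (y φ : 𝕜 → 𝕜)
    (x : 𝕜) : Prop where
  differentiableAt : DifferentiableAt 𝕜 y x
  mul_deriv_eq : P * deriv y x = φ x
  hasDerivAt_flux : HasDerivAt φ (Q * y x) x

namespace IsSturmLiouvilleAt

section Transformations

variable {𝕜 : Type*} [NontriviallyNormedField 𝕜] {P Q x : 𝕜} {y φ : 𝕜 → 𝕜}

lemma const_mul (h : IsSturmLiouvilleAt P Q y φ x) (k : 𝕜) :
    IsSturmLiouvilleAt (k * P) (k * Q) y (fun t ↦ k * φ t) x where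
  differentiableAt := h.differentiableAt
  mul_deriv_eq := by rw [mul_assoc, h.mul_deriv_eq]
  hasDerivAt_flux := by simpa only [mul_assoc] using h.hasDerivAt_flux.const_mul k

lemma comp {u : 𝕜 → 𝕜} {u' R : 𝕜} (h : IsSturmLiouvilleAt P Q y φ (u x))
    (hu : HasDerivAt u u' x) (hR : R * u' = P) :
    IsSturmLiouvilleAt R (Q * u') (fun t ↦ y (u t)) (fun t ↦ φ (u t)) x where
  differentiableAt := h.differentiableAt.comp x hu.differentiableAt
  mul_deriv_eq := by
    have hderiv : HasDerivAt (fun t ↦ y (u t)) (deriv y (u x) * u') x :=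
      h.differentiableAt.hasDerivAt.comp x hu
    rw [hderiv.deriv, ← h.mul_deriv_eq, ← hR]
    ring
  hasDerivAt_flux := (h.hasDerivAt_flux.comp x hu).congr_deriv (by ring)

/-- Multiplying by a gauge `w` which itself solves an equation with leading coefficient `P`: in the
derivative of the new flux the terms with `w' φ` cancel. -/
lemma mul {w κ : 𝕜 → 𝕜} {Q₀ : 𝕜} (hw : IsSturmLiouvilleAt P Q₀ w κ x) (hwx : w x ≠ 0)
    (h : IsSturmLiouvilleAt (P * w x ^ 2) (Q * w x ^ 2) y φ x) :
    IsSturmLiouvilleAt P (Q₀ + Q) (fun t ↦ w t * y t) (fun t ↦ κ t * y t + φ t / w t) x where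
  differentiableAt := hw.differentiableAt.mul h.differentiableAt
  mul_deriv_eq := by
    rw [deriv_fun_mul hw.differentiableAt h.differentiableAt, ← hw.mul_deriv_eq, ← h.mul_deriv_eq]
    field_simp
  hasDerivAt_flux := by
    refine ((hw.hasDerivAt_flux.mul h.differentiableAt.hasDerivAt).add
      (h.hasDerivAt_flux.div hw.differentiableAt.hasDerivAt hwx)).congr_deriv ?_
    rw [← hw.mul_deriv_eq, ← h.mul_deriv_eq]
    field_simp
    ring

lemma hasDerivAt_wronskian {y₁ y₂ φ₁ φ₂ : 𝕜 → 𝕜} (h₁ : IsSturmLiouvilleAt P Q y₁ φ₁ x)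
    (h₂ : IsSturmLiouvilleAt P Q y₂ φ₂ x) :
    HasDerivAt (fun t ↦ φ₁ t * y₂ t - y₁ t * φ₂ t) 0 x := by
  refine ((h₁.hasDerivAt_flux.mul h₂.differentiableAt.hasDerivAt).sub
    (h₁.differentiableAt.hasDerivAt.mul h₂.hasDerivAt_flux)).congr_deriv ?_
  rw [← h₁.mul_deriv_eq, ← h₂.mul_deriv_eq]
  ring

lemma hasDerivAt_div {y₁ y₂ φ₁ φ₂ : 𝕜 → 𝕜} (h₁ : IsSturmLiouvilleAt P Q y₁ φ₁ x)
    (h₂ : IsSturmLiouvilleAt P Q y₂ φ₂ x) (hP : P ≠ 0) (hy₂ : y₂ x ≠ 0)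
    (hW : φ₁ x * y₂ x - y₁ x * φ₂ x = 0) : HasDerivAt (fun t ↦ y₁ t / y₂ t) 0 x := by
  refine (h₁.differentiableAt.hasDerivAt.div h₂.differentiableAt.hasDerivAt hy₂).congr_deriv ?_
  rw [← h₁.mul_deriv_eq, ← h₂.mul_deriv_eq] at hW
  have hnum : deriv y₁ x * y₂ x - y₁ x * deriv y₂ x = 0 :=
    (mul_eq_zero.1 (by linear_combination hW : P * _ = 0)).resolve_left hP
  rw [hnum, zero_div]

end Transformations

variable {P Q y₁ y₂ φ₁ φ₂ : ℝ → ℝ} {a b : ℝ}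

lemma wronskian_eq_zero
    (h₁ : ∀ x ∈ Set.Icc a b, IsSturmLiouvilleAt (P x) (Q x) y₁ φ₁ x)
    (h₂ : ∀ x ∈ Set.Icc a b, IsSturmLiouvilleAt (P x) (Q x) y₂ φ₂ x) (hPb : P b = 0) :
    ∀ x ∈ Set.Icc a b, φ₁ x * y₂ x - y₁ x * φ₂ x = 0 := by
  intro x hx
  have hb : b ∈ Set.Icc a b := ⟨hx.1.trans hx.2, le_rfl⟩
  have hW : ∀ t ∈ Set.Icc a b, HasDerivAt (fun t ↦ φ₁ t * y₂ t - y₁ t * φ₂ t) 0 t :=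
    fun t ht ↦ (h₁ t ht).hasDerivAt_wronskian (h₂ t ht)
  have hconst := constant_of_has_deriv_right_zero
    (fun t ht ↦ (hW t ht).continuousAt.continuousWithinAt)
    (fun t ht ↦ (hW t (Set.Ico_subset_Icc_self ht)).hasDerivWithinAt)
  have hφ₁ : φ₁ b = 0 := by rw [← (h₁ b hb).mul_deriv_eq, hPb, zero_mul]
  have hφ₂ : φ₂ b = 0 := by rw [← (h₂ b hb).mul_deriv_eq, hPb, zero_mul]
  simpa [hφ₁, hφ₂] using (hconst x hx).trans (hconst b hb).symm

/-- The flux of every solution regular at the singular endpoint `b` vanishes there; hence so does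
the Wronskian, and the solutions regular at `b` form a line. -/
theorem mul_eq_mul_of_eq_zero_right (hab : a ≤ b)
    (h₁ : ∀ x ∈ Set.Icc a b, IsSturmLiouvilleAt (P x) (Q x) y₁ φ₁ x)
    (h₂ : ∀ x ∈ Set.Icc a b, IsSturmLiouvilleAt (P x) (Q x) y₂ φ₂ x)
    (hP : ∀ x ∈ Set.Ico a b, P x ≠ 0) (hPb : P b = 0) (hy₂ : ∀ x ∈ Set.Icc a b, y₂ x ≠ 0) :
    y₁ a * y₂ b = y₁ b * y₂ a := by
  have hW := wronskian_eq_zero h₁ h₂ hPb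
  have ha : a ∈ Set.Icc a b := Set.left_mem_Icc.2 hab
  have hb : b ∈ Set.Icc a b := Set.right_mem_Icc.2 hab
  have hratio : y₁ b / y₂ b = y₁ a / y₂ a := constant_of_has_deriv_right_zero
    (f := fun t ↦ y₁ t / y₂ t)
    (fun t ht ↦ ((h₁ t ht).differentiableAt.continuousAt.div
      (h₂ t ht).differentiableAt.continuousAt (hy₂ t ht)).continuousWithinAt)
    (fun t ht ↦ have ht' := Set.Ico_subset_Icc_self ht
      ((h₁ t ht').hasDerivAt_div (h₂ t ht') (hP t ht) (hy₂ t ht') (hW t ht')).hasDerivWithinAt)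
    b hb
  rw [div_eq_div_iff (hy₂ b hb) (hy₂ a ha)] at hratio
  exact hratio.symm

end IsSturmLiouvilleAt

/-- The flux `z (1 - z) y'` of the solution `y = ₂F₁ a b 1` of the hypergeometric equation with
`a + b = c = 1`. -/
noncomputable def hypergeometricFlux {𝕂 : Type*} [RCLike 𝕂] (a b z : 𝕂) : 𝕂 :=
  z * (1 - z) * deriv (₂F₁ a b 1) z

lemma isSturmLiouvilleAt_ordinaryHypergeometric {𝕂 : Type*} [RCLike 𝕂] {a b z : 𝕂}
    (hab : a + b = 1) (hz : ‖z‖ < 1) :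
    IsSturmLiouvilleAt (z * (1 - z)) (a * b) (₂F₁ a b 1) (hypergeometricFlux a b) z where
  differentiableAt := (analyticAt_ordinaryHypergeometric a b 1 hz).differentiableAt
  mul_deriv_eq := rfl
  hasDerivAt_flux := by
    have hderiv := (analyticAt_ordinaryHypergeometric a b 1 hz).deriv.differentiableAt.hasDerivAt
    have hpoly := (hasDerivAt_id' z).mul ((hasDerivAt_id' z).const_sub 1)
    refine (hpoly.mul hderiv).congr_deriv ?_
    have hone (n : ℕ) : (n : 𝕂) ≠ -1 := fun h ↦ n.cast_add_one_ne_zero (eq_neg_iff_add_eq_zero.1 h)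
    rw [← ordinaryHypergeometric_ode a b hone hz, hab]
    simp only [Pi.mul_apply]
    ring

end SturmLiouville

section CubicTransformation

variable {p : ℝ}

lemma one_add_self_add_sq_pos (p : ℝ) : 0 < 1 + p + p ^ 2 := by
  nlinarith [sq_nonneg (2 * p + 1)]

lemma hasDerivAt_one_add_self_add_sq (p : ℝ) :
    HasDerivAt (fun x : ℝ ↦ 1 + x + x ^ 2) (1 + 2 * p) p := by
  simpa using ((hasDerivAt_id' p).const_add 1).fun_add (hasDerivAt_pow 2 p)

lemma hasDerivAt_one_add_two_mul (p : ℝ) : HasDerivAt (fun x : ℝ ↦ 1 + 2 * x) 2 p := by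
  simpa using ((hasDerivAt_id' p).const_mul 2).const_add 1

lemma hasDerivAt_α (hp : 1 + 2 * p ≠ 0) :
    HasDerivAt α (6 * p ^ 2 * (1 + p) ^ 2 / (1 + 2 * p) ^ 2) p := by
  refine (((hasDerivAt_pow 3 p).fun_mul ((hasDerivAt_id' p).const_add 2)).fun_div
    (hasDerivAt_one_add_two_mul p) hp).congr_deriv ?_
  field_simp
  ring

lemma hasDerivAt_β (p : ℝ) :
    HasDerivAt β (27 * p * (1 - p) * (1 + p) * (2 + p) * (1 + 2 * p) / (4 * (1 + p + p ^ 2) ^ 4))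
      p := by
  have hN := (one_add_self_add_sq_pos p).ne'
  have hnum := ((hasDerivAt_pow 2 p).const_mul 27).fun_mul
    (((hasDerivAt_id' p).const_add 1).fun_pow 2)
  have hden := ((hasDerivAt_one_add_self_add_sq p).fun_pow 3).const_mul 4
  refine (hnum.fun_div hden (by simpa)).congr_deriv ?_
  field_simp
  ring

lemma γ_pos (hp : 0 < 1 + 2 * p) : 0 < γ p :=
  div_pos (one_add_self_add_sq_pos p) (Real.sqrt_pos.2 hp)

lemma γ_sq (hp : 0 < 1 + 2 * p) : γ p ^ 2 = (1 + p + p ^ 2) ^ 2 / (1 + 2 * p) := by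
  rw [γ, div_pow, Real.sq_sqrt hp.le]

lemma hasDerivAt_γ (hp : 0 < 1 + 2 * p) :
    HasDerivAt γ (3 * p * (1 + p) / ((1 + p + p ^ 2) * (1 + 2 * p)) * γ p) p := by
  have hN := (one_add_self_add_sq_pos p).ne'
  have hsqrt := (Real.sqrt_pos.2 hp).ne'
  refine ((hasDerivAt_one_add_self_add_sq p).fun_div
    ((hasDerivAt_one_add_two_mul p).sqrt hp.ne') hsqrt).congr_deriv ?_
  rw [γ]
  field_simp
  rw [Real.sq_sqrt hp.le]
  ring

lemma one_sub_β_eq (p : ℝ) :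
    1 - β p = ((1 - p) * (2 + p) * (1 + 2 * p)) ^ 2 / (4 * (1 + p + p ^ 2) ^ 3) := by
  have hN := (one_add_self_add_sq_pos p).ne'
  rw [β]
  field_simp
  ring

lemma one_sub_α_eq (hp : 1 + 2 * p ≠ 0) : 1 - α p = (1 - p) * (1 + p) ^ 3 / (1 + 2 * p) := by
  rw [α, eq_div_iff hp, sub_mul, div_mul_cancel₀ _ hp]
  ring

lemma one_sub_β_mem_Ico (hp : 0 < p) : 1 - β p ∈ Set.Ico 0 1 := by
  have hβ : 0 < β p := by rw [β]; positivity
  exact ⟨by rw [one_sub_β_eq]; positivity, sub_lt_self 1 hβ⟩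

lemma one_sub_α_mem_Ico (hp : p ∈ Set.Ioc 0 1) : 1 - α p ∈ Set.Ico 0 1 := by
  obtain ⟨hp₀, hp₁⟩ := hp
  have : 0 ≤ 1 - p := sub_nonneg.2 hp₁
  have hα : 0 < α p := by rw [α]; positivity
  exact ⟨by rw [one_sub_α_eq (by positivity)]; positivity, sub_lt_self 1 hα⟩

/-- The leading coefficient `P` of the equation `(P y')' = Q y` satisfied by both sides of the
identity as functions of `p`. The pullbacks of the two hypergeometric equations are scaled by `-4`
and `-6` to reach it. -/
noncomputable def leadingCoeff (p : ℝ) : ℝ :=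
  p * (1 - p) * (1 + p) * (2 + p) * (1 + 2 * p) / (1 + p + p ^ 2) ^ 2

/-- The coefficient `Q` of the equation `(P y')' = Q y` satisfied by both sides of the identity as
functions of `p`. -/
noncomputable def potential (p : ℝ) : ℝ :=
  6 * p * (1 - p) * (1 + p) * (2 + p) * (1 + 2 * p) / (1 + p + p ^ 2) ^ 4

lemma isSturmLiouvilleAt_ordinaryHypergeometric_one_sub_β (hp : 0 < p) :
    IsSturmLiouvilleAt (leadingCoeff p) (potential p)
      (fun x ↦ ₂F₁ (1 / 3 : ℝ) (2 / 3) 1 (1 - β x))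
      (fun x ↦ -4 * hypergeometricFlux (1 / 3) (2 / 3) (1 - β x)) p := by
  have hN := (one_add_self_add_sq_pos p).ne'
  have hF := (isSturmLiouvilleAt_ordinaryHypergeometric (a := (1 / 3 : ℝ)) (b := 2 / 3)
    (by norm_num) (norm_lt_one_of_mem_Ico (one_sub_β_mem_Ico hp))).const_mul (-4)
  convert hF.comp (u := fun x ↦ 1 - β x) ((hasDerivAt_β p).const_sub 1) ?_ using 1
  · rw [potential]
    field_simp
    ring
  · rw [sub_sub_cancel, one_sub_β_eq, leadingCoeff, β]
    field_simp

/-- The flux `P γ'` of `γ`, where `P` is `leadingCoeff`. -/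
noncomputable def γFlux (p : ℝ) : ℝ :=
  3 * (p ^ 2 * (1 - p) * (1 + p) ^ 2 * (2 + p)) / (1 + p + p ^ 2) ^ 3 * γ p

/-- The term subtracted from `potential` is what the pullback of `₂F₁ (1 / 2) (1 / 2) 1` along
`1 - α` contributes. -/
lemma isSturmLiouvilleAt_γ (hp : 0 < 1 + 2 * p) :
    IsSturmLiouvilleAt (leadingCoeff p)
      (potential p - 9 * p ^ 2 * (1 + p) ^ 2 / ((1 + 2 * p) * (1 + p + p ^ 2) ^ 2)) γ γFlux p where
  differentiableAt := (hasDerivAt_γ hp).differentiableAt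
  mul_deriv_eq := by
    have hL : 1 + p * 2 ≠ 0 := by rw [mul_comm]; exact hp.ne'
    have hN := (one_add_self_add_sq_pos p).ne'
    rw [(hasDerivAt_γ hp).deriv, leadingCoeff, γFlux]
    field_simp
  hasDerivAt_flux := by
    have hL : 1 + p * 2 ≠ 0 := by rw [mul_comm]; exact hp.ne'
    have hN := (one_add_self_add_sq_pos p).ne'
    have hnum := ((((hasDerivAt_pow 2 p).fun_mul ((hasDerivAt_id' p).const_sub 1)).fun_mul
      (((hasDerivAt_id' p).const_add 1).fun_pow 2)).fun_mul
        ((hasDerivAt_id' p).const_add 2)).const_mul 3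
    refine ((hnum.fun_div ((hasDerivAt_one_add_self_add_sq p).fun_pow 3) (by simpa)).fun_mul
      (hasDerivAt_γ hp)).congr_deriv ?_
    rw [potential]
    field_simp
    ring

lemma isSturmLiouvilleAt_ordinaryHypergeometric_one_sub_α (hp : p ∈ Set.Ioc 0 1) :
    IsSturmLiouvilleAt (leadingCoeff p * γ p ^ 2)
      (9 * p ^ 2 * (1 + p) ^ 2 / ((1 + 2 * p) * (1 + p + p ^ 2) ^ 2) * γ p ^ 2)
      (fun x ↦ ₂F₁ (1 / 2 : ℝ) (1 / 2) 1 (1 - α x))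
      (fun x ↦ -6 * hypergeometricFlux (1 / 2) (1 / 2) (1 - α x)) p := by
  have hL : 0 < 1 + 2 * p := by linarith [hp.1]
  have hN := (one_add_self_add_sq_pos p).ne'
  have hG := (isSturmLiouvilleAt_ordinaryHypergeometric (a := (1 / 2 : ℝ)) (b := 1 / 2)
    (by norm_num) (norm_lt_one_of_mem_Ico (one_sub_α_mem_Ico hp))).const_mul (-6)
  convert hG.comp (u := fun x ↦ 1 - α x) ((hasDerivAt_α hL.ne').const_sub 1) ?_ using 1
  · rw [γ_sq hL]
    field_simp
    ring
  · rw [γ_sq hL, sub_sub_cancel, one_sub_α_eq hL.ne', leadingCoeff, α]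
    field_simp

lemma isSturmLiouvilleAt_γ_mul_ordinaryHypergeometric_one_sub_α (hp : p ∈ Set.Ioc 0 1) :
    IsSturmLiouvilleAt (leadingCoeff p) (potential p)
      (fun x ↦ γ x * ₂F₁ (1 / 2 : ℝ) (1 / 2) 1 (1 - α x))
      (fun x ↦ γFlux x * ₂F₁ (1 / 2 : ℝ) (1 / 2) 1 (1 - α x) +
        -6 * hypergeometricFlux (1 / 2) (1 / 2) (1 - α x) / γ x) p := by
  have hL : 0 < 1 + 2 * p := by linarith [hp.1]
  simpa only [sub_add_cancel] using (isSturmLiouvilleAt_γ hL).mul (γ_pos hL).ne'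
    (isSturmLiouvilleAt_ordinaryHypergeometric_one_sub_α hp)

lemma leadingCoeff_one : leadingCoeff 1 = 0 := by
  norm_num [leadingCoeff]

lemma leadingCoeff_pos (hp : p ∈ Set.Ioo 0 1) : 0 < leadingCoeff p := by
  obtain ⟨hp₀, hp₁⟩ := hp
  have : 0 < 1 - p := sub_pos.2 hp₁
  rw [leadingCoeff]
  positivity

end CubicTransformation

/-- Corollary (5.21) of Berndt–Bhargava–Garvan. -/
theorem RBBG_corollary (p : ℝ) (hp0 : 0 < p) (hp1 : p < 1) :
    Real.sqrt 3 * hyp2F1 (1/3) (2/3) 1 (1 - β p) =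
      γ p * hyp2F1 (1/2) (1/2) 1 (1 - α p) := by
  have hIoc : Set.Icc p 1 ⊆ Set.Ioc 0 1 := fun x hx ↦ ⟨hp0.trans_le hx.1, hx.2⟩
  have hne : ∀ x ∈ Set.Icc p 1, γ x * ₂F₁ (1 / 2 : ℝ) (1 / 2) 1 (1 - α x) ≠ 0 := fun x hx ↦
    mul_ne_zero (γ_pos (by linarith [(hIoc hx).1])).ne' (zero_lt_one.trans_le
      (one_le_ordinaryHypergeometric one_half_pos one_half_pos one_pos
        (one_sub_α_mem_Ico (hIoc hx)))).ne'
  have hproportional := IsSturmLiouvilleAt.mul_eq_mul_of_eq_zero_right hp1.le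
    (fun x hx ↦ isSturmLiouvilleAt_ordinaryHypergeometric_one_sub_β (hIoc hx).1)
    (fun x hx ↦ isSturmLiouvilleAt_γ_mul_ordinaryHypergeometric_one_sub_α (hIoc hx))
    (fun x hx ↦ (leadingCoeff_pos ⟨hp0.trans_le hx.1, hx.2⟩).ne') leadingCoeff_one hne
  have hα₁ : α 1 = 1 := by norm_num [α]
  have hβ₁ : β 1 = 1 := by norm_num [β]
  have hγ₁ : γ 1 = √3 := by norm_num [γ]
  rw [hyp2F1_eq_ordinaryHypergeometric, hyp2F1_eq_ordinaryHypergeometric, mul_comm]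
  simpa only [hα₁, hβ₁, hγ₁, sub_self, ordinaryHypergeometric_zero, mul_one, one_mul] using
    hproportional
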